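/- Let ρ : (0,∞) → (0,∞) satisfy ρ(t) → ∞ and ρ(t)/t → 0 as t → ∞. Then μ^{ℓ,r}_t([ρ(t), ∞)) = (E[R^γ]/γ)·t·ρ(t)^{−γ}·(1+o(1)) as t → ∞; equivalently, μ^{ℓ,r}_t([ρ(t),∞)) / (t·ρ(t)^{−γ}) → E[R^γ]/γ. -/

import Mathlib

open MeasureTheory Filter Set
open scoped ENNReal NNReal Topology

noncomputable section

/-- `ℓ_t(s,u)`: the length of the interval `[s,s+u] ∩ [0,t]`. -/
def ellK (t s u : ℝ) : ℝ := max 0 (min (s + u) t - max s 0)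

/-- The intensity measure `u^{-γ-1} du` on `(0,∞)`. -/
def muU (γ : ℝ) : Measure ℝ :=
  (volume.restrict (Set.Ioi 0)).withDensity fun u => ENNReal.ofReal (u ^ (-γ - 1))

/-- The measure `μ^ℓ_t` on `(0,∞)`:
`μ^ℓ_t(A) = ∫_ℝ ∫_0^∞ 1{ℓ_t(s,u) ∈ A} u^{-γ-1} du ds`. -/
def muEll (γ t : ℝ) : Measure ℝ :=
  (Measure.map (fun p : ℝ × ℝ => ellK t p.1 p.2)
    ((volume : Measure ℝ).prod (muU γ))).restrict (Set.Ioi 0)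

/-- The measure `μ^{ℓ,r}_t` on `(0,∞)`:
`μ^{ℓ,r}_t(A) = ∫_{(0,∞)} ∫_{(0,∞)} 1{rℓ ∈ A} μ^ℓ_t(dℓ) F_R(dr)`. -/
def muEllR (γ t : ℝ) (FR : Measure ℝ) : Measure ℝ :=
  (Measure.map (fun p : ℝ × ℝ => p.1 * p.2) (FR.prod (muEll γ t))).restrict (Set.Ioi 0)

/-- The measure `ν` on `[0,1]`: density `s^{-(γ+1)} + ((2-γ)/γ)·s^{-γ}` on `(0,1)` with
respect to Lebesgue measure, together with an atom of mass `1/(γ(γ-1))` at the point `1`. -/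
def nuM (γ : ℝ) : Measure ℝ :=
  (volume.restrict (Set.Ioo 0 1)).withDensity
      (fun s => ENNReal.ofReal (s ^ (-(γ + 1)) + (2 - γ) / γ * s ^ (-γ)))
    + (Real.toNNReal (1 / (γ * (γ - 1)))) • Measure.dirac 1

instance nuM.sigmaFinite (γ : ℝ) : SigmaFinite (nuM γ) := by
  unfold nuM; infer_instance

end

/-!
For `x ≤ t`, the interval `[s, s + u]` overlaps `[0, t]` in length at least `x` iff `s ≤ t - x` and
`u ≥ x` (when `s > 0`) or `u ≥ x - s` (when `s ≤ 0`). Integrating the tail `y ^ (-γ) / γ` of the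
`u`-intensity over `s` shows that `μ^ℓ_t [x, ∞) = t x ^ (-γ) h (x / t)` for a bounded profile `h`
with `h w → 1 / γ` as `w → 0+`.
Conditioning on `R = r` replaces `x` by `ρ / r`, so that
`μ^{ℓ,r}_t [ρ, ∞) / (t ρ ^ (-γ)) = E[R ^ γ h (ρ / (t R))]` depends only on `ρ / t`, and dominated
convergence applies with the multiple of `R ^ γ` given by the bound on `h`.
-/

section DominatedConvergence

variable {μ : Measure ℝ} {f h : ℝ → ℝ} {c C : ℝ}

lemma tendsto_setIntegral_Ioi_mul_comp_div (hf : IntegrableOn f (Ioi 0) μ) (hh : Measurable h)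
    (hbound : ∀ w, 0 < w → |h w| ≤ C) (hlim : Tendsto h (𝓝[>] 0) (𝓝 c)) :
    Tendsto (fun z => ∫ r in Ioi 0, f r * h (z / r) ∂μ) (𝓝[>] 0)
      (𝓝 ((∫ r in Ioi 0, f r ∂μ) * c)) := by
  rw [← integral_mul_const]
  refine tendsto_integral_filter_of_dominated_convergence (fun r => |f r| * C) ?_ ?_
    (hf.abs.mul_const C) ?_
  · exact .of_forall fun z =>
      hf.aestronglyMeasurable.mul (hh.comp (measurable_id.const_div z)).aestronglyMeasurable
  · filter_upwards [self_mem_nhdsWithin] with z hz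
    filter_upwards [ae_restrict_mem measurableSet_Ioi] with r hr
    rw [Real.norm_eq_abs, abs_mul]
    exact mul_le_mul_of_nonneg_left (hbound _ (div_pos hz hr)) (abs_nonneg _)
  · filter_upwards [ae_restrict_mem measurableSet_Ioi] with r (hr : 0 < r)
    have hdiv : Tendsto (fun z => z / r) (𝓝[>] 0) (𝓝[>] 0) := by
      refine tendsto_nhdsWithin_iff.2 ⟨?_, ?_⟩
      · exact (Continuous.tendsto' (by fun_prop) 0 0 (zero_div r)).mono_left nhdsWithin_le_nhds
      · filter_upwards [self_mem_nhdsWithin] with z (hz : 0 < z) using div_pos hz hr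
    exact (hlim.comp hdiv).const_mul (f r)

end DominatedConvergence

section Pareto

variable {a γ x : ℝ}

lemma lintegral_Ici_ofReal_rpow (ha : a < -1) (hx : 0 < x) :
    ∫⁻ y in Ici x, ENNReal.ofReal (y ^ a) = ENNReal.ofReal (-x ^ (a + 1) / (a + 1)) := by
  rw [← restrict_Ioi_eq_restrict_Ici, ← integral_Ioi_rpow_of_lt ha hx,
    ofReal_integral_eq_lintegral_ofReal (integrableOn_Ioi_rpow_of_lt ha hx)]
  filter_upwards [ae_restrict_mem measurableSet_Ioi] with y hy
  exact Real.rpow_nonneg (hx.trans hy).le _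

lemma muU_Ici (hγ : 0 < γ) (hx : 0 < x) : muU γ (Ici x) = ENNReal.ofReal (x ^ (-γ) / γ) := by
  rw [muU, withDensity_apply _ measurableSet_Ici,
    Measure.restrict_restrict_of_subset (Ici_subset_Ioi.2 hx),
    lintegral_Ici_ofReal_rpow (by linarith) hx, sub_add_cancel, neg_div_neg_eq]

lemma lintegral_Iic_ofReal_sub_rpow (ha : a < -1) (hx : 0 < x) :
    ∫⁻ s in Iic 0, ENNReal.ofReal ((x - s) ^ a) = ENNReal.ofReal (-x ^ (a + 1) / (a + 1)) := by
  have hreflect : Iic (0 : ℝ) = (x - ·) ⁻¹' Ici x := by simp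
  rw [← lintegral_Ici_ofReal_rpow ha hx, hreflect]
  exact (Measure.measurePreserving_sub_left volume x).setLIntegral_comp_preimage
    measurableSet_Ici (f := fun y => ENNReal.ofReal (y ^ a)) (by fun_prop)

lemma lintegral_Iic_ofReal_sub_rpow_neg_div (hγ : 1 < γ) (hx : 0 < x) :
    ∫⁻ s in Iic 0, ENNReal.ofReal ((x - s) ^ (-γ) / γ) =
      ENNReal.ofReal (x ^ (1 - γ) / (γ * (γ - 1))) := by
  have hγinv : 0 ≤ γ⁻¹ := inv_nonneg.2 (zero_le_one.trans hγ.le)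
  simp only [div_eq_mul_inv _ γ, ENNReal.ofReal_mul' hγinv]
  rw [lintegral_mul_const _ (by fun_prop), lintegral_Iic_ofReal_sub_rpow (by linarith) hx,
    ← ENNReal.ofReal_mul' hγinv, neg_add_eq_sub, ← neg_sub γ 1, neg_div_neg_eq,
    ← div_eq_mul_inv, div_div, mul_comm γ]

end Pareto

instance muU.sFinite (γ : ℝ) : SFinite (muU γ) := by unfold muU; infer_instance

instance muEll.sFinite (γ t : ℝ) : SFinite (muEll γ t) := by unfold muEll; infer_instance

section Overlap

variable {γ t s u x : ℝ}

lemma measurable_ellK (t : ℝ) : Measurable fun p : ℝ × ℝ => ellK t p.1 p.2 := by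
  unfold ellK
  fun_prop

lemma le_ellK_iff (hx : 0 < x) : x ≤ ellK t s u ↔ x + max s 0 ≤ t ∧ x + max s 0 - s ≤ u := by
  rw [ellK, le_max_iff, or_iff_right hx.not_ge, le_sub_iff_add_le, le_min_iff, and_comm,
    sub_le_iff_le_add']

lemma muU_setOf_le_ellK (hγ : 0 < γ) (hx : 0 < x) :
    muU γ {u | x ≤ ellK t s u} =
      if x + max s 0 ≤ t then ENNReal.ofReal ((x + max s 0 - s) ^ (-γ) / γ) else 0 := by
  have hpos : 0 < x + max s 0 - s := by linarith [le_max_left s 0]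
  rw [← muU_Ici hγ hpos]
  split_ifs with hxt <;> simp [le_ellK_iff hx, hxt, Ici]

lemma muEll_Ici_eq_lintegral (hx : 0 < x) :
    muEll γ t (Ici x) = ∫⁻ s, muU γ {u | x ≤ ellK t s u} := by
  rw [muEll, Measure.restrict_eq_self _ (Ici_subset_Ioi.2 hx),
    Measure.map_apply (measurable_ellK t) measurableSet_Ici,
    Measure.prod_apply (measurable_ellK t measurableSet_Ici)]
  rfl

lemma muEll_Iic_zero (γ t : ℝ) : muEll γ t (Iic 0) = 0 := by
  rw [muEll, Measure.restrict_apply measurableSet_Iic, Iic_inter_Ioi, Ioc_self, measure_empty]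

lemma muEll_Ici_of_lt (hx : 0 < x) (hxt : t < x) : muEll γ t (Ici x) = 0 := by
  have hslice (s u : ℝ) : ¬ x ≤ ellK t s u := fun h => by
    linarith [((le_ellK_iff hx).1 h).1, le_max_right s 0]
  simp [muEll_Ici_eq_lintegral hx, hslice]

lemma muEll_Ici_eq_setLIntegral (hγ : 0 < γ) (hx : 0 < x) (hxt : x ≤ t) :
    muEll γ t (Ici x) =
      ∫⁻ s in Iic (t - x), ENNReal.ofReal ((x + max s 0 - s) ^ (-γ) / γ) := by
  rw [muEll_Ici_eq_lintegral hx, ← lintegral_indicator measurableSet_Iic]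
  congr 1 with s
  have hmem : x + max s 0 ≤ t ↔ s ∈ Iic (t - x) := by
    rw [← le_sub_iff_add_le', max_le_iff, and_iff_left (sub_nonneg.2 hxt), mem_Iic]
  simp only [muU_setOf_le_ellK hγ hx, hmem, indicator_apply]

lemma muEll_Ici_of_le (hγ : 1 < γ) (hx : 0 < x) (hxt : x ≤ t) :
    muEll γ t (Ici x) =
      ENNReal.ofReal (x ^ (1 - γ) / (γ * (γ - 1)) + x ^ (-γ) / γ * (t - x)) := by
  have : 0 < γ - 1 := sub_pos.2 hγ
  have htx : 0 ≤ t - x := sub_nonneg.2 hxt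
  have left_of_zero : ∫⁻ s in Iic 0, ENNReal.ofReal ((x + max s 0 - s) ^ (-γ) / γ) =
      ENNReal.ofReal (x ^ (1 - γ) / (γ * (γ - 1))) := by
    rw [← lintegral_Iic_ofReal_sub_rpow_neg_div hγ hx]
    refine setLIntegral_congr_fun measurableSet_Iic fun s hs => ?_
    simp only [max_eq_right (mem_Iic.1 hs), add_zero]
  have right_of_zero : ∫⁻ s in Ioc 0 (t - x), ENNReal.ofReal ((x + max s 0 - s) ^ (-γ) / γ) =
      ENNReal.ofReal (x ^ (-γ) / γ * (t - x)) := by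
    calc _ = ∫⁻ _ in Ioc 0 (t - x), ENNReal.ofReal (x ^ (-γ) / γ) := by
          refine setLIntegral_congr_fun measurableSet_Ioc fun s hs => ?_
          simp only [max_eq_left hs.1.le, add_sub_cancel_right]
      _ = _ := by
          rw [setLIntegral_const, Real.volume_Ioc, sub_zero, ← ENNReal.ofReal_mul' htx]
  rw [muEll_Ici_eq_setLIntegral (zero_lt_one.trans hγ) hx hxt, ← Iic_union_Ioc_eq_Iic htx,
    lintegral_union measurableSet_Ioc (Iic_disjoint_Ioc le_rfl), left_of_zero, right_of_zero,
    ← ENNReal.ofReal_add (by positivity) (by positivity)]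

end Overlap

/-- The profile of the tail of `muEll`: the mass of `[x, ∞)` under `muEll γ t` is
`t * x ^ (-γ) * tailProfile γ (x / t)`. It vanishes beyond `1` because no overlap exceeds `t`. -/
noncomputable def tailProfile (γ : ℝ) : ℝ → ℝ :=
  (Iic 1).indicator fun w => (1 - w + w / (γ - 1)) / γ

section TailProfile

variable {γ w : ℝ}

lemma measurable_tailProfile (γ : ℝ) : Measurable (tailProfile γ) :=
  Measurable.indicator (by fun_prop) measurableSet_Iic

lemma tailProfile_mem_Icc (hγ : 1 < γ) (hw : 0 ≤ w) : tailProfile γ w ∈ Icc 0 (1 / (γ - 1)) := by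
  have : 0 < γ - 1 := sub_pos.2 hγ
  by_cases hw1 : w ≤ 1
  · rw [tailProfile, indicator_of_mem (mem_Iic.2 hw1)]
    have : 0 ≤ 1 - w := sub_nonneg.2 hw1
    refine ⟨by positivity, ?_⟩
    calc (1 - w + w / (γ - 1)) / γ ≤ (1 + 1 / (γ - 1)) / γ := by gcongr; linarith
      _ = 1 / (γ - 1) := by field_simp; ring
  · rw [tailProfile, indicator_of_notMem (mt mem_Iic.1 hw1)]
    exact ⟨le_rfl, by positivity⟩

lemma tendsto_tailProfile_nhds_zero (γ : ℝ) : Tendsto (tailProfile γ) (𝓝 0) (𝓝 γ⁻¹) := by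
  have hcont : Continuous fun w : ℝ => (1 - w + w / (γ - 1)) / γ := by fun_prop
  refine (hcont.tendsto' 0 γ⁻¹ (by simp)).congr' ?_
  filter_upwards [Iic_mem_nhds zero_lt_one] with w hw
  rw [tailProfile, indicator_of_mem hw]

end TailProfile

section Tail

variable {γ t x : ℝ} {FR : Measure ℝ}

lemma muEll_Ici (hγ : 1 < γ) (ht : 0 < t) (hx : 0 < x) :
    muEll γ t (Ici x) = ENNReal.ofReal (t * x ^ (-γ) * tailProfile γ (x / t)) := by
  have hγ1 : γ - 1 ≠ 0 := by linarith
  rcases le_or_gt x t with hxt | hxt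
  · have hmem : x / t ∈ Iic 1 := div_le_one_of_le₀ hxt ht.le
    rw [muEll_Ici_of_le hγ hx hxt, tailProfile, indicator_of_mem hmem,
      sub_eq_add_neg 1 γ, Real.rpow_add hx, Real.rpow_one]
    congr 1
    field_simp
    ring
  · have hnotMem : x / t ∉ Iic 1 := ((one_lt_div ht).2 hxt).not_ge
    rw [muEll_Ici_of_lt hx hxt, tailProfile, indicator_of_notMem hnotMem, mul_zero,
      ENNReal.ofReal_zero]

lemma muEllR_Ici_eq_setLIntegral (hx : 0 < x) :
    muEllR γ t FR (Ici x) = ∫⁻ r in Ioi 0, muEll γ t (Ici (x / r)) ∂FR := by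
  have hmul : Measurable fun p : ℝ × ℝ => p.1 * p.2 := by fun_prop
  rw [muEllR, Measure.restrict_eq_self _ (Ici_subset_Ioi.2 hx),
    Measure.map_apply hmul measurableSet_Ici, Measure.prod_apply (hmul measurableSet_Ici),
    ← lintegral_indicator measurableSet_Ioi]
  congr 1 with r
  change muEll γ t {l | x ≤ r * l} = _
  rcases lt_or_ge 0 r with hr | hr
  · rw [indicator_of_mem (mem_Ioi.2 hr)]
    simp only [← div_le_iff₀' hr, Ici]
  · rw [indicator_of_notMem (notMem_Ioi.2 hr)]
    refine measure_mono_null (fun l (hl : x ≤ r * l) => ?_) (muEll_Iic_zero γ t)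
    exact le_of_not_gt fun hl0 => (hx.trans_le hl).not_ge (mul_nonpos_of_nonpos_of_nonneg hr hl0.le)

-- Where the integrand is not integrable, the mass is infinite and both sides are `0`.
lemma toReal_muEllR_Ici (hγ : 1 < γ) (ht : 0 < t) (hx : 0 < x) :
    (muEllR γ t FR (Ici x)).toReal =
      t * x ^ (-γ) * ∫ r in Ioi 0, r ^ γ * tailProfile γ (x / t / r) ∂FR := by
  have hscale : ∀ r ∈ Ioi (0 : ℝ), muEll γ t (Ici (x / r)) =
      ENNReal.ofReal (t * x ^ (-γ) * (r ^ γ * tailProfile γ (x / t / r))) := fun r hr => by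
    rw [muEll_Ici hγ ht (div_pos hx hr), Real.div_rpow hx.le (le_of_lt hr),
      Real.rpow_neg (le_of_lt hr), div_inv_eq_mul, div_right_comm]
    congr 1
    ring
  rw [muEllR_Ici_eq_setLIntegral hx, setLIntegral_congr_fun measurableSet_Ioi hscale,
    ← integral_const_mul, integral_eq_lintegral_of_nonneg_ae]
  · filter_upwards [ae_restrict_mem measurableSet_Ioi] with r (hr : 0 < r)
    have hprofile := (tailProfile_mem_Icc hγ (w := x / t / r) (by positivity)).1
    simp only [Pi.zero_apply]
    positivity
  · have := measurable_tailProfile γ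
    fun_prop

end Tail

theorem stmt_10_general {ι : Type*} {l : Filter ι} {γ : ℝ} (hγ : 1 < γ) {FR : Measure ℝ}
    (hmom : IntegrableOn (fun r => r ^ γ) (Ioi 0) FR) {τ ρ : ι → ℝ}
    (hτpos : ∀ᶠ i in l, 0 < τ i) (hρpos : ∀ᶠ i in l, 0 < ρ i)
    (hρτ : Tendsto (fun i => ρ i / τ i) l (𝓝 0)) :
    Tendsto (fun i => (muEllR γ (τ i) FR (Ici (ρ i))).toReal / (τ i * ρ i ^ (-γ)))
      l (𝓝 ((∫ r in Ioi 0, r ^ γ ∂FR) / γ)) := by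
  have hprofile_bound : ∀ w, 0 < w → |tailProfile γ w| ≤ 1 / (γ - 1) := fun w hw => by
    have hmem := tailProfile_mem_Icc hγ hw.le
    exact (abs_of_nonneg hmem.1).trans_le hmem.2
  have hratio : Tendsto (fun i => ρ i / τ i) l (𝓝[>] 0) := by
    refine tendsto_nhdsWithin_iff.2 ⟨hρτ, ?_⟩
    filter_upwards [hτpos, hρpos] with i hτ hρ using div_pos hρ hτ
  have hlim := (tendsto_setIntegral_Ioi_mul_comp_div hmom (measurable_tailProfile γ) hprofile_bound
    ((tendsto_tailProfile_nhds_zero γ).mono_left nhdsWithin_le_nhds)).comp hratio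
  rw [div_eq_mul_inv]
  refine hlim.congr' ?_
  filter_upwards [hτpos, hρpos] with i hτ hρ
  have hne : τ i * ρ i ^ (-γ) ≠ 0 := by positivity
  rw [toReal_muEllR_Ici hγ hτ hρ, mul_div_cancel_left₀ _ hne, Function.comp_apply]

/-- If `ρ(t) → ∞` and `ρ(t)/t → 0`, then
`μ^{ℓ,r}_t([ρ(t),∞)) = (E[R^γ]/γ)·t·ρ(t)^{-γ}·(1+o(1))` as `t → ∞`. -/
theorem stmt_10 (γ : ℝ) (hγ1 : 1 < γ) (hγ2 : γ < 2)
    (FR : Measure ℝ) [IsProbabilityMeasure FR] (hFRpos : FR (Set.Iic 0) = 0)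
    (hmom : Integrable (fun r => r ^ γ) FR)
    (ρ : ℝ → ℝ) (hρpos : ∀ t, 0 < ρ t)
    (hρinf : Tendsto ρ atTop atTop)
    (hρt : Tendsto (fun t => ρ t / t) atTop (𝓝 0)) :
    Tendsto (fun t => (muEllR γ t FR (Set.Ici (ρ t))).toReal / (t * ρ t ^ (-γ)))
      atTop (𝓝 ((∫ r, r ^ γ ∂FR) / γ)) := by
  have hsupport : FR.restrict (Ioi 0) = FR := Measure.restrict_eq_self_of_ae_mem <| by
    simpa [ae_iff, Iic] using hFRpos
  simpa [hsupport] using stmt_10_general hγ1 (hmom.integrableOn (s := Ioi 0))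
    (eventually_gt_atTop 0) (.of_forall hρpos) hρt
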